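/- Let ℓ = 163 and let L be the unique degree-3 intermediate field of ℚ(ζ_ℓ)/ℚ, with ring of integers O_L. Then every prime ideal of O_L containing 163 is a principal ideal. (Equivalently, since 163 is totally ramified in L, the unique prime of L above 163 is principal, so 163 splits completely in the Hilbert class field of L.) -/

import Mathlib

instance (ℓ : ℕ+) : FiniteDimensional ℚ (CyclotomicField ℓ ℚ) :=
  haveI : NeZero ((ℓ : ℕ) : ℚ) := ⟨Nat.cast_ne_zero.mpr ℓ.ne_zero⟩
  @IsCyclotomicExtension.finiteDimensional {(ℓ : ℕ)} ℚ _ _ _ _ _ _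
    (CyclotomicField.isCyclotomicExtension (ℓ : ℕ) ℚ)

instance (ℓ : ℕ+) (L : IntermediateField ℚ (CyclotomicField ℓ ℚ)) : NumberField L := ⟨⟩

open NumberField in
theorem aux_principal (p : ℕ) [hp : Fact p.Prime] (hp2 : p ≠ 2) (K : Type) [Field K] [NumberField K]
    [hK : IsCyclotomicExtension {p} ℚ K] (L : IntermediateField ℚ K)
    (P : Ideal (𝓞 L)) (hP : P.IsPrime) (hpP : (p : 𝓞 L) ∈ P) : P.IsPrincipal := by
  have hζ := IsCyclotomicExtension.zeta_spec p ℚ K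
  have hgal : IsGalois ℚ K := IsCyclotomicExtension.isGalois {p} ℚ K
  have : IsGalois L K := IsGalois.tower_top_of_isGalois ℚ L K
  set x : 𝓞 K := hζ.toInteger - 1 with hx
  set y : 𝓞 L := RingOfIntegers.norm L x with hy
  have hnorm : Algebra.norm ℤ y = p := by
    have h1 : ((Algebra.norm ℤ y : ℤ) : ℚ) = (p : ℚ) := by
      rw [Algebra.coe_norm_int, hy, RingOfIntegers.coe_norm, Algebra.norm_norm]
      exact hζ.norm_sub_one_of_prime_ne_two'
        (Polynomial.cyclotomic.irreducible_rat hp.out.pos) hp2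
    exact_mod_cast h1
  have hprime : (Ideal.span {y}).IsPrime := by
    apply Ideal.isPrime_of_irreducible_absNorm
    rw [Ideal.absNorm_span_singleton, hnorm, Int.natAbs_natCast]
    exact hp.out
  have hne : Ideal.span {y} ≠ ⊥ := by
    rw [Ne, Ideal.span_singleton_eq_bot]
    intro h
    rw [h, Algebra.norm_zero] at hnorm
    exact hp.out.ne_zero (by exact_mod_cast hnorm.symm)
  obtain ⟨Q, -, hQ, hQP⟩ := Ideal.exists_ideal_over_prime_of_isIntegral (S := 𝓞 K) P ⊥ (by
    intro a ha
    have h0 : a = 0 := by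
      apply FaithfulSMul.algebraMap_injective (𝓞 L) (𝓞 K)
      simpa using ha
    rw [h0]; exact P.zero_mem)
  have hpQ : (p : 𝓞 K) ∈ Q := by
    rw [← hQP] at hpP
    simpa using hpP
  have hxQ : x ∈ Q := by
    have ha := IsCyclotomicExtension.Rat.associated_zeta_sub_one_pow_prime p hζ
    exact hQ.mem_of_pow_mem _ (Q.mem_of_dvd ha.symm.dvd hpQ)
  have hyP : y ∈ P := by
    rw [← hQP]
    exact Q.mem_of_dvd (RingOfIntegers.dvd_norm L x) hxQ
  have hmax := hprime.isMaximal hne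
  have := hmax.eq_of_le hP.ne_top ((Ideal.span_singleton_le_iff_mem _).2 hyP)
  exact ⟨y, this.symm⟩

/-- Let `ℓ = 163` and let `L` be the unique degree-3 intermediate field of `ℚ(ζ_ℓ)/ℚ`, with
ring of integers `O_L`.  Then every prime ideal of `O_L` containing `163` is principal. -/
theorem primes_above_163_principal
    (L : IntermediateField ℚ (CyclotomicField 163 ℚ)) (hL : Module.finrank ℚ L = 3)
    (P : Ideal (NumberField.RingOfIntegers L)) (hP : P.IsPrime)
    (h163 : (163 : NumberField.RingOfIntegers L) ∈ P) :
    P.IsPrincipal := by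
  have : Fact (Nat.Prime 163) := ⟨by norm_num⟩
  have : NeZero ((163 : ℕ) : ℚ) := ⟨by norm_num⟩
  have : IsCyclotomicExtension {163} ℚ (CyclotomicField 163 ℚ) :=
    CyclotomicField.isCyclotomicExtension 163 ℚ
  have : NumberField (CyclotomicField 163 ℚ) :=
    IsCyclotomicExtension.numberField {163} ℚ (CyclotomicField 163 ℚ)
  exact aux_principal 163 (by norm_num) (CyclotomicField 163 ℚ) L P hP (by exact_mod_cast h163)
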